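/- ∫₀¹ k (K'(k)³/K(k)) dk = (π³ log 2)/8. -/

import Mathlib

open scoped Real
open MeasureTheory

noncomputable def EllK (k : ℝ) : ℝ :=
  ∫ x in (0:ℝ)..(1:ℝ), 1 / Real.sqrt ((1 - x^2) * (1 - k^2 * x^2))

noncomputable def EllE (k : ℝ) : ℝ :=
  ∫ x in (0:ℝ)..(1:ℝ), Real.sqrt ((1 - k^2 * x^2) / (1 - x^2))

noncomputable def EllK' (k : ℝ) : ℝ := EllK (Real.sqrt (1 - k^2))

/-! ### Complete elliptic integrals as functions of the parameter -/

/-- The complete elliptic integral of the first kind as a function of the parameter `m = k²`. -/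
noncomputable def paramK (m : ℝ) : ℝ := ∫ θ in (0:ℝ)..(π / 2), 1 / √(1 - m * Real.sin θ ^ 2)

/-- The complete elliptic integral of the second kind as a function of the parameter `m = k²`. -/
noncomputable def paramE (m : ℝ) : ℝ := ∫ θ in (0:ℝ)..(π / 2), √(1 - m * Real.sin θ ^ 2)

lemma image_sin_Ioo : Real.sin '' Set.Ioo 0 (π / 2) = Set.Ioo 0 1 := by
  ext x
  constructor
  · rintro ⟨θ, ⟨h0, h1⟩, rfl⟩
    refine ⟨Real.sin_pos_of_pos_of_lt_pi h0 (by linarith), ?_⟩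
    rw [← Real.sin_pi_div_two]
    exact Real.sin_lt_sin_of_lt_of_le_pi_div_two (by linarith) le_rfl h1
  · rintro ⟨h0, h1⟩
    exact ⟨Real.arcsin x, ⟨Real.arcsin_pos.2 h0, Real.arcsin_lt_pi_div_two.2 h1⟩,
      Real.sin_arcsin (by linarith) h1.le⟩

lemma EllK_eq_paramK (k : ℝ) : EllK k = paramK (k ^ 2) := by
  have hinj : Set.InjOn Real.sin (Set.Ioo 0 (π / 2)) :=
    Real.injOn_sin.mono (fun x hx => ⟨by linarith [hx.1, Real.pi_pos], hx.2.le⟩ :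
      Set.Ioo 0 (π / 2) ⊆ Set.Icc (-(π / 2)) (π / 2))
  have h := integral_image_eq_integral_abs_deriv_smul (s := Set.Ioo 0 (π / 2)) (f := Real.sin)
    (f' := Real.cos) measurableSet_Ioo
    (fun x _ => (Real.hasDerivAt_sin x).hasDerivWithinAt) hinj
    (fun x => 1 / √((1 - x ^ 2) * (1 - k ^ 2 * x ^ 2)))
  rw [image_sin_Ioo] at h
  rw [EllK, paramK, intervalIntegral.integral_of_le zero_le_one,
    intervalIntegral.integral_of_le (by positivity), integral_Ioc_eq_integral_Ioo,
    integral_Ioc_eq_integral_Ioo, h]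
  refine setIntegral_congr_fun measurableSet_Ioo fun θ hθ => ?_
  have hc : 0 < Real.cos θ := Real.cos_pos_of_mem_Ioo ⟨by linarith [hθ.1, Real.pi_pos], hθ.2⟩
  have h1 : 1 - Real.sin θ ^ 2 = Real.cos θ ^ 2 := by rw [Real.cos_sq']
  simp only [smul_eq_mul]
  rw [h1, Real.sqrt_mul (sq_nonneg _), Real.sqrt_sq hc.le, abs_of_pos hc]
  rw [one_div, mul_inv, ← mul_assoc, mul_inv_cancel₀ hc.ne', one_mul, one_div]

lemma one_sub_mul_sin_sq_pos {m : ℝ} (hm : m < 1) (θ : ℝ) : 0 < 1 - m * Real.sin θ ^ 2 := by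
  have h0 := sq_nonneg (Real.sin θ)
  have h1 := Real.sin_sq_le_one θ
  rcases le_or_gt m 0 with h | h <;> nlinarith

lemma min_le_one_sub_mul_sin_sq (m θ : ℝ) : min 1 (1 - m) ≤ 1 - m * Real.sin θ ^ 2 := by
  have h0 := sq_nonneg (Real.sin θ)
  have h1 := Real.sin_sq_le_one θ
  rcases le_or_gt m 0 with h | h
  · exact (min_le_left _ _).trans (by nlinarith)
  · exact (min_le_right _ _).trans (by nlinarith)

lemma continuous_inv_sqrt_one_sub {m : ℝ} (hm : m < 1) :
    Continuous fun θ => 1 / √(1 - m * Real.sin θ ^ 2) := by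
  refine Continuous.div continuous_const (by fun_prop) fun θ => ?_
  exact (Real.sqrt_pos.2 (one_sub_mul_sin_sq_pos hm θ)).ne'

lemma continuous_sin_sq_div {m : ℝ} (hm : m < 1) :
    Continuous fun θ => Real.sin θ ^ 2 / √(1 - m * Real.sin θ ^ 2) ^ 3 := by
  refine Continuous.div (by fun_prop) (by fun_prop) fun θ => ?_
  exact (pow_pos (Real.sqrt_pos.2 (one_sub_mul_sin_sq_pos hm θ)) 3).ne'

lemma paramK_pos {m : ℝ} (hm : m < 1) : 0 < paramK m := by
  refine intervalIntegral.intervalIntegral_pos_of_pos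
    ((continuous_inv_sqrt_one_sub hm).intervalIntegrable _ _) (fun θ => ?_) (by positivity)
  have := Real.sqrt_pos.2 (one_sub_mul_sin_sq_pos hm θ)
  positivity

lemma integral_sin_sq_div {m : ℝ} (hm : m < 1) :
    m * (1 - m) * ∫ θ in (0:ℝ)..(π / 2), Real.sin θ ^ 2 / √(1 - m * Real.sin θ ^ 2) ^ 3 =
      paramE m - (1 - m) * paramK m := by
  have hder : ∀ θ ∈ Set.uIcc 0 (π / 2),
      HasDerivAt (fun θ => -m * (Real.sin θ * Real.cos θ / √(1 - m * Real.sin θ ^ 2)))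
        (m * (1 - m) * (Real.sin θ ^ 2 / √(1 - m * Real.sin θ ^ 2) ^ 3)
          - √(1 - m * Real.sin θ ^ 2) + (1 - m) * (1 / √(1 - m * Real.sin θ ^ 2))) θ := by
    intro θ _
    have hp := one_sub_mul_sin_sq_pos hm θ
    have hs := Real.sqrt_pos.2 hp
    have hd : HasDerivAt (fun θ => 1 - m * Real.sin θ ^ 2)
        (-(m * (2 * Real.sin θ * Real.cos θ))) θ := by
      have := (((Real.hasDerivAt_sin θ).pow 2).const_mul m).const_sub 1
      simpa using this
    have h := ((((Real.hasDerivAt_sin θ).mul (Real.hasDerivAt_cos θ)).div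
      (hd.sqrt hp.ne') hs.ne').const_mul (-m))
    refine h.congr_deriv ?_
    have hsq : √(1 - m * Real.sin θ ^ 2) ^ 2 = 1 - m * Real.sin θ ^ 2 := Real.sq_sqrt hp.le
    have hc : Real.cos θ ^ 2 = 1 - Real.sin θ ^ 2 := Real.cos_sq' θ
    simp only [Pi.mul_apply]
    set D := √(1 - m * Real.sin θ ^ 2)
    set s := Real.sin θ
    set c := Real.cos θ
    field_simp
    have e4 : D ^ 4 = (1 - m * s ^ 2) ^ 2 := by rw [← hsq]; ring
    simp only [e4, hsq, hc]
    ring_nf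
  have hi := intervalIntegral.integral_eq_sub_of_hasDerivAt hder (by
    apply Continuous.intervalIntegrable
    have h1 := continuous_sin_sq_div hm
    have h2 := continuous_inv_sqrt_one_sub hm
    fun_prop)
  rw [intervalIntegral.integral_add, intervalIntegral.integral_sub,
    intervalIntegral.integral_const_mul, intervalIntegral.integral_const_mul] at hi
  · simp only [Real.sin_zero, Real.cos_pi_div_two, mul_zero, zero_mul, zero_div, sub_zero] at hi
    simp only [paramE, paramK]
    linarith
  all_goals
    apply Continuous.intervalIntegrable
    have h1 := continuous_sin_sq_div hm
    have h2 := continuous_inv_sqrt_one_sub hm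
    fun_prop

lemma hasDerivAt_paramK {m : ℝ} (h0 : m ≠ 0) (hm : m < 1) :
    HasDerivAt paramK ((paramE m - (1 - m) * paramK m) / (2 * m * (1 - m))) m := by
  obtain ⟨r, hr1, hr2⟩ := exists_between hm
  have hc := lt_min one_pos (sub_pos.2 hr2)
  have h := intervalIntegral.hasDerivAt_integral_of_dominated_loc_of_deriv_le
    (μ := volume) (a := 0) (b := π / 2) (x₀ := m) (s := Set.Iio r)
    (F := fun m θ => 1 / √(1 - m * Real.sin θ ^ 2))
    (F' := fun m θ => 1 / 2 * (Real.sin θ ^ 2 / √(1 - m * Real.sin θ ^ 2) ^ 3))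
    (bound := fun _ => 1 / 2 * (1 / √(min 1 (1 - r)) ^ 3)) (Iio_mem_nhds hr1)
    (by
      filter_upwards [Iio_mem_nhds hm] with x hx
      exact (continuous_inv_sqrt_one_sub hx).aestronglyMeasurable)
    ((continuous_inv_sqrt_one_sub hm).intervalIntegrable _ _)
    (((continuous_sin_sq_div hm).const_mul _).aestronglyMeasurable)
    (by
      refine Filter.Eventually.of_forall fun θ _ x hx => ?_
      have hx : x < r := hx
      rw [Real.norm_of_nonneg (by positivity)]
      have h1 : √(min 1 (1 - r)) ≤ √(1 - x * Real.sin θ ^ 2) :=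
        Real.sqrt_le_sqrt (le_trans (min_le_min le_rfl (by linarith))
          (min_le_one_sub_mul_sin_sq x θ))
      have h2 := Real.sqrt_pos.2 hc
      gcongr
      exact Real.sin_sq_le_one θ)
    intervalIntegrable_const
    (by
      refine Filter.Eventually.of_forall fun θ _ x hx => ?_
      have hx : x < r := hx
      have hp := one_sub_mul_sin_sq_pos (hx.trans hr2) θ
      have hs := Real.sqrt_pos.2 hp
      have hd : HasDerivAt (fun x => 1 - x * Real.sin θ ^ 2) (-(Real.sin θ ^ 2)) x := by
        simpa using ((hasDerivAt_id x).mul_const (Real.sin θ ^ 2)).const_sub 1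
      have := (hd.sqrt hp.ne').inv hs.ne'
      simp only [one_div]
      refine this.congr_deriv ?_
      field_simp)
  refine h.2.congr_deriv ?_
  rw [intervalIntegral.integral_const_mul, ← integral_sin_sq_div hm]
  have : 1 - m ≠ 0 := by linarith
  generalize ∫ θ in (0:ℝ)..(π / 2), Real.sin θ ^ 2 / √(1 - m * Real.sin θ ^ 2) ^ 3 = J
  field_simp

lemma paramE_sub_paramK {m : ℝ} (hm : m < 1) :
    paramE m - paramK m =
      -m * ∫ θ in (0:ℝ)..(π / 2), Real.sin θ ^ 2 / √(1 - m * Real.sin θ ^ 2) := by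
  have h2 := continuous_inv_sqrt_one_sub hm
  rw [paramE, paramK, ← intervalIntegral.integral_sub, ← intervalIntegral.integral_const_mul]
  · refine intervalIntegral.integral_congr fun θ _ => ?_
    have hp := one_sub_mul_sin_sq_pos hm θ
    have hs := Real.sqrt_pos.2 hp
    have hsq : √(1 - m * Real.sin θ ^ 2) ^ 2 = 1 - m * Real.sin θ ^ 2 := Real.sq_sqrt hp.le
    set D := √(1 - m * Real.sin θ ^ 2)
    field_simp
    rw [hsq]
    ring
  all_goals exact Continuous.intervalIntegrable (by fun_prop) _ _

lemma continuous_sin_sq_div_sqrt {m : ℝ} (hm : m < 1) :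
    Continuous fun θ => Real.sin θ ^ 2 / √(1 - m * Real.sin θ ^ 2) := by
  refine Continuous.div (by fun_prop) (by fun_prop) fun θ => ?_
  exact (Real.sqrt_pos.2 (one_sub_mul_sin_sq_pos hm θ)).ne'

lemma hasDerivAt_paramE {m : ℝ} (h0 : m ≠ 0) (hm : m < 1) :
    HasDerivAt paramE ((paramE m - paramK m) / (2 * m)) m := by
  obtain ⟨r, hr1, hr2⟩ := exists_between hm
  have hc := lt_min one_pos (sub_pos.2 hr2)
  have h := intervalIntegral.hasDerivAt_integral_of_dominated_loc_of_deriv_le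
    (μ := volume) (a := 0) (b := π / 2) (x₀ := m) (s := Set.Iio r)
    (F := fun m θ => √(1 - m * Real.sin θ ^ 2))
    (F' := fun m θ => -(1 / 2) * (Real.sin θ ^ 2 / √(1 - m * Real.sin θ ^ 2)))
    (bound := fun _ => 1 / 2 * (1 / √(min 1 (1 - r)))) (Iio_mem_nhds hr1)
    (by
      filter_upwards with x
      exact Continuous.aestronglyMeasurable (by fun_prop))
    (Continuous.intervalIntegrable (by fun_prop) _ _)
    (((continuous_sin_sq_div_sqrt hm).const_mul _).aestronglyMeasurable)
    (by
      refine Filter.Eventually.of_forall fun θ _ x hx => ?_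
      have hx : x < r := hx
      rw [norm_mul, norm_neg, Real.norm_of_nonneg (by positivity),
        Real.norm_of_nonneg (by positivity)]
      have h1 : √(min 1 (1 - r)) ≤ √(1 - x * Real.sin θ ^ 2) :=
        Real.sqrt_le_sqrt (le_trans (min_le_min le_rfl (by linarith))
          (min_le_one_sub_mul_sin_sq x θ))
      have h2 := Real.sqrt_pos.2 hc
      gcongr
      exact Real.sin_sq_le_one θ)
    intervalIntegrable_const
    (by
      refine Filter.Eventually.of_forall fun θ _ x hx => ?_
      have hx : x < r := hx
      have hp := one_sub_mul_sin_sq_pos (hx.trans hr2) θ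
      have hs := Real.sqrt_pos.2 hp
      have hd : HasDerivAt (fun x => 1 - x * Real.sin θ ^ 2) (-(Real.sin θ ^ 2)) x := by
        simpa using ((hasDerivAt_id x).mul_const (Real.sin θ ^ 2)).const_sub 1
      refine (hd.sqrt hp.ne').congr_deriv ?_
      field_simp)
  refine h.2.congr_deriv ?_
  rw [intervalIntegral.integral_const_mul, paramE_sub_paramK hm]
  generalize ∫ θ in (0:ℝ)..(π / 2), Real.sin θ ^ 2 / √(1 - m * Real.sin θ ^ 2) = J
  field_simp

lemma continuous_paramE : Continuous paramE :=
  intervalIntegral.continuous_parametric_intervalIntegral_of_continuous' (by fun_prop) _ _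

lemma continuousAt_paramK_zero : ContinuousAt paramK 0 := by
  refine intervalIntegral.continuousAt_of_dominated_interval (μ := volume) (a := 0) (b := π / 2)
    (F := fun m θ => 1 / √(1 - m * Real.sin θ ^ 2)) (bound := fun _ => 1 / √(1 / 2))
    ?_ ?_ intervalIntegrable_const ?_
  · filter_upwards [Iio_mem_nhds one_pos] with x hx
    exact (continuous_inv_sqrt_one_sub hx).aestronglyMeasurable
  · filter_upwards [Iio_mem_nhds (show (0:ℝ) < 1 / 2 by norm_num)] with x hx
    have hx : x < 1 / 2 := hx
    refine Filter.Eventually.of_forall fun θ _ => ?_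
    rw [Real.norm_of_nonneg (by positivity)]
    have h1 : √(1 / 2) ≤ √(1 - x * Real.sin θ ^ 2) :=
      Real.sqrt_le_sqrt (le_trans (le_min (by norm_num) (by linarith))
          (min_le_one_sub_mul_sin_sq x θ))
    gcongr
  · refine Filter.Eventually.of_forall fun θ _ => ?_
    refine ContinuousAt.div continuousAt_const (by fun_prop) (by simp)

lemma paramK_zero : paramK 0 = π / 2 := by simp [paramK]

lemma paramE_one : paramE 1 = 1 := by
  have h : ∫ θ in (0:ℝ)..(π / 2), Real.cos θ = 1 := by simp [integral_cos]
  refine Eq.trans ?_ h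
  refine intervalIntegral.integral_congr fun θ hθ => ?_
  rw [Set.uIcc_of_le (by positivity)] at hθ
  have hc : 0 ≤ Real.cos θ :=
    Real.cos_nonneg_of_mem_Icc ⟨by linarith [hθ.1, Real.pi_pos], hθ.2⟩
  rw [one_mul, ← Real.cos_sq', Real.sqrt_sq hc]

lemma paramK_one_sub_le {m : ℝ} (h0 : 0 < m) (h1 : m < 1) :
    paramK (1 - m) ≤ (π / 2) / √m := by
  have h : paramK (1 - m) ≤ ∫ θ in (0:ℝ)..(π / 2), 1 / √m := by
    refine intervalIntegral.integral_mono (by positivity)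
      ((continuous_inv_sqrt_one_sub (by linarith)).intervalIntegrable _ _)
      intervalIntegrable_const fun θ => ?_
    have : √m ≤ √(1 - (1 - m) * Real.sin θ ^ 2) :=
      Real.sqrt_le_sqrt (le_trans (le_min h1.le (by linarith)) (min_le_one_sub_mul_sin_sq _ θ))
    have hm := Real.sqrt_pos.2 h0
    simp only
    gcongr
  refine h.trans_eq ?_
  simp [div_eq_mul_inv]

lemma abs_paramE_sub_paramK_le {m : ℝ} (h0 : 0 < m) (h1 : m ≤ 1 / 2) :
    |paramE m - paramK m| ≤ m * π := by
  rw [paramE_sub_paramK (by linarith), abs_mul, abs_neg, abs_of_pos h0]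
  gcongr
  have h := intervalIntegral.norm_integral_le_of_norm_le_const (a := 0) (b := π / 2) (C := 2)
    (f := fun θ => Real.sin θ ^ 2 / √(1 - m * Real.sin θ ^ 2)) fun θ _ => by
      have h2 : (1 / 2 : ℝ) ≤ √(1 - m * Real.sin θ ^ 2) := by
        refine Real.le_sqrt_of_sq_le ?_
        refine le_trans (le_min ?_ ?_) (min_le_one_sub_mul_sin_sq m θ) <;> linarith
      rw [Real.norm_of_nonneg (by positivity), div_le_iff₀ (by linarith)]
      linarith [Real.sin_sq_le_one θ]
  refine h.trans_eq ?_
  rw [sub_zero, abs_of_pos (by positivity)]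
  ring

/-- Legendre's relation. -/
lemma legendre_relation {m : ℝ} (h0 : 0 < m) (h1 : m < 1) :
    paramE m * paramK (1 - m) + paramE (1 - m) * paramK m - paramK m * paramK (1 - m) =
      π / 2 := by
  set L : ℝ → ℝ := fun m =>
    paramE m * paramK (1 - m) + paramE (1 - m) * paramK m - paramK m * paramK (1 - m) with hL
  have hder : ∀ x ∈ Set.Ioo (0:ℝ) 1, HasDerivAt L 0 x := by
    intro x hx
    have hx0 : x ≠ 0 := hx.1.ne'
    have hx1 : 1 - x ≠ 0 := by linarith [hx.2]
    have hK := hasDerivAt_paramK hx0 hx.2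
    have hE := hasDerivAt_paramE hx0 hx.2
    have hs : HasDerivAt (fun x : ℝ => 1 - x) (-1) x := by
      simpa using (hasDerivAt_id x).const_sub 1
    have hK' := (hasDerivAt_paramK hx1 (by linarith [hx.1])).comp x hs
    have hE' := (hasDerivAt_paramE hx1 (by linarith [hx.1])).comp x hs
    have := ((hE.mul hK').add (hE'.mul hK)).sub (hK.mul hK')
    refine this.congr_deriv ?_
    simp only [Function.comp_apply, sub_sub_cancel]
    field_simp
    ring
  have hconst : ∀ x ∈ Set.Ioo (0:ℝ) 1, L x = L m := fun x hx =>
    isOpen_Ioo.is_const_of_deriv_eq_zero isPreconnected_Ioo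
      (fun y hy => (hder y hy).differentiableAt.differentiableWithinAt)
      (fun y hy => (hder y hy).deriv) hx ⟨h0, h1⟩
  have hlim1 : Filter.Tendsto L (nhdsWithin 0 (Set.Ioi 0)) (nhds (L m)) := by
    refine tendsto_const_nhds.congr' ?_
    filter_upwards [Ioo_mem_nhdsGT one_pos] with x hx
    exact (hconst x hx).symm
  have hlim2 : Filter.Tendsto L (nhdsWithin 0 (Set.Ioi 0)) (nhds (0 + 1 * (π / 2))) := by
    have hLe : L = fun x => (paramE x - paramK x) * paramK (1 - x) + paramE (1 - x) * paramK x := by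
      funext x
      simp only [hL]
      ring
    rw [hLe]
    refine Filter.Tendsto.add ?_ (Filter.Tendsto.mul ?_ ?_)
    · refine squeeze_zero_norm' (a := fun x => π * (π / 2) * √x) ?_ ?_
      · filter_upwards [Ioo_mem_nhdsGT (show (0:ℝ) < 1 / 2 by norm_num)] with x hx
        have hs := Real.sqrt_pos.2 hx.1
        rw [norm_mul, Real.norm_eq_abs, Real.norm_of_nonneg (paramK_pos (by linarith [hx.1])).le]
        refine (mul_le_mul (abs_paramE_sub_paramK_le hx.1 hx.2.le)
          (paramK_one_sub_le hx.1 (by linarith [hx.2])) (paramK_pos (by linarith [hx.1])).le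
          (by have := hx.1; positivity)).trans_eq ?_
        rw [mul_div_assoc']
        rw [div_eq_iff hs.ne']
        nth_rewrite 1 [← Real.mul_self_sqrt hx.1.le]
        ring
      · have : Continuous fun x => π * (π / 2) * √x := by fun_prop
        simpa using (this.tendsto 0).mono_left nhdsWithin_le_nhds
    · have : Continuous fun x => paramE (1 - x) := continuous_paramE.comp (by fun_prop)
      simpa [paramE_one] using (this.tendsto 0).mono_left nhdsWithin_le_nhds
    · have := continuousAt_paramK_zero.tendsto
      rw [paramK_zero] at this
      exact this.mono_left nhdsWithin_le_nhds
  have := tendsto_nhds_unique hlim1 hlim2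
  simpa [hL] using this

lemma hasDerivAt_paramK_ratio {m : ℝ} (h0 : 0 < m) (h1 : m < 1) :
    HasDerivAt (fun m => paramK (1 - m) / paramK m)
      (-(π / (4 * m * (1 - m) * paramK m ^ 2))) m := by
  have hx1 : 1 - m ≠ 0 := by linarith
  have hK := hasDerivAt_paramK h0.ne' h1
  have hs : HasDerivAt (fun x : ℝ => 1 - x) (-1) m := by
    simpa using (hasDerivAt_id m).const_sub 1
  have hK' := (hasDerivAt_paramK hx1 (by linarith)).comp m hs
  have hp := paramK_pos h1
  refine (hK'.div hK hp.ne').congr_deriv ?_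
  have hl := legendre_relation h0 h1
  simp only [Function.comp_apply, sub_sub_cancel]
  field_simp
  linear_combination (-4) * hl

/-! ### The Weierstrass function: second order equation and injectivity of `(℘, d℘/dz)` -/

namespace PeriodPair

open Filter Topology

variable (L : PeriodPair)

lemma countable_lattice : (L.lattice : Set ℂ).Countable :=
  countable_of_Lindelof_of_discrete (X := L.lattice)

lemma isPreconnected_compl_lattice : IsPreconnected (L.lattice : Set ℂ)ᶜ :=
  (L.countable_lattice.isConnected_compl_of_one_lt_rank (by simp)).isPreconnected

lemma tendsto_sq_mul_weierstrassP :
    Tendsto (fun z => z ^ 2 * L.weierstrassP z) (𝓝[≠] 0) (𝓝 1) := by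
  have h : Tendsto (fun z => z ^ 2 * L.weierstrassPExcept 0 z + 1) (𝓝 0) (𝓝 1) := by
    have : ContinuousAt (fun z => z ^ 2 * L.weierstrassPExcept 0 z + 1) 0 := by
      have := (L.analyticAt_weierstrassPExcept 0).continuousAt
      fun_prop
    simpa using this.tendsto
  refine (h.mono_left nhdsWithin_le_nhds).congr' ?_
  filter_upwards [self_mem_nhdsWithin] with z hz
  have hz : z ≠ 0 := hz
  have := L.ite_eq_one_sub_sq_mul_weierstrassP 0 (zero_mem _) z
  simpa [hz] using this.symm

lemma eventually_notMem_lattice : ∀ᶠ z in 𝓝[≠] (0 : ℂ), z ∉ L.lattice := by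
  filter_upwards [self_mem_nhdsWithin,
    mem_nhdsWithin_of_mem_nhds (L.compl_lattice_sdiff_singleton_mem_nhds 0)] with z h0 h1 h2
  exact h1 ⟨h2, h0⟩

lemma hasDerivAt_weierstrassP {z : ℂ} (hz : z ∉ L.lattice) :
    HasDerivAt L.weierstrassP (L.derivWeierstrassP z) z := by
  have := (L.analyticOnNhd_weierstrassP z hz).differentiableAt.hasDerivAt
  rwa [L.deriv_weierstrassP] at this

lemma hasDerivAt_derivWeierstrassP {z : ℂ} (hz : z ∉ L.lattice) :
    HasDerivAt L.derivWeierstrassP (6 * L.weierstrassP z ^ 2 - L.g₂ / 2) z := by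
  have hA := L.analyticOnNhd_weierstrassP
  have hB := L.analyticOnNhd_derivWeierstrassP
  have hprod : ∀ z ∈ (L.lattice : Set ℂ)ᶜ, (2 * deriv L.derivWeierstrassP z -
      12 * L.weierstrassP z ^ 2 + L.g₂) * L.derivWeierstrassP z = 0 := by
    intro z hz
    have h1 := L.hasDerivAt_weierstrassP hz
    have h2 := (hB z hz).differentiableAt.hasDerivAt
    have h3 := (((h1.pow 3).const_mul 4).sub (h1.const_mul L.g₂)).sub_const L.g₃
    have h4 : HasDerivAt (fun z => L.derivWeierstrassP z ^ 2) _ z := h3.congr_of_eventuallyEq (by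
      filter_upwards [L.isClosed_lattice.isOpen_compl.mem_nhds hz] with w hw
      simpa using L.derivWeierstrassP_sq w hw)
    have := h4.unique (h2.pow 2)
    simp only [Nat.cast_ofNat] at this
    linear_combination -this
  have hF : AnalyticOnNhd ℂ (fun z => 2 * deriv L.derivWeierstrassP z -
      12 * L.weierstrassP z ^ 2 + L.g₂) (L.lattice : Set ℂ)ᶜ := by
    intro z hz
    have h1 := hA z hz
    have h2 := (hB z hz).deriv
    fun_prop
  rcases hF.eq_zero_or_eq_zero_of_mul_eq_zero hB hprod L.isPreconnected_compl_lattice with h | h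
  · have h1 := (hB z hz).differentiableAt.hasDerivAt
    refine h1.congr_deriv ?_
    linear_combination (h z hz) / 2
  · exfalso
    have hc : ∀ w ∈ (L.lattice : Set ℂ)ᶜ, L.weierstrassP w = L.weierstrassP z := fun w hw =>
      L.isClosed_lattice.isOpen_compl.is_const_of_deriv_eq_zero L.isPreconnected_compl_lattice
        L.differentiableOn_weierstrassP (by rw [L.deriv_weierstrassP]; exact h) hw hz
    have h0 : Tendsto (fun w : ℂ => w ^ 2 * L.weierstrassP z) (𝓝[≠] 0) (𝓝 0) := by
      have : Continuous (fun w : ℂ => w ^ 2 * L.weierstrassP z) := by fun_prop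
      simpa using (this.tendsto 0).mono_left nhdsWithin_le_nhds
    refine zero_ne_one (tendsto_nhds_unique h0 (L.tendsto_sq_mul_weierstrassP.congr' ?_))
    filter_upwards [L.eventually_notMem_lattice] with w hw
    rw [hc w hw]

lemma deriv_derivWeierstrassP_eq_sumInvPow {z : ℂ} (hz : z ∉ L.lattice) :
    6 * L.weierstrassP z ^ 2 - L.g₂ / 2 = 6 * L.sumInvPow z 4 := by
  rw [← L.deriv_derivWeierstrassPExcept_self z, L.derivWeierstrassPExcept_of_notMem _ hz,
    (L.hasDerivAt_derivWeierstrassP hz).deriv]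

lemma eventually_weierstrassP_add_eq {w₁ w₂ : ℂ} (h₁ : w₁ ∉ L.lattice) (h₂ : w₂ ∉ L.lattice)
    (h : L.weierstrassP w₁ = L.weierstrassP w₂)
    (h' : L.derivWeierstrassP w₁ = L.derivWeierstrassP w₂) :
    ∀ᶠ s in 𝓝 0, L.weierstrassP (w₁ + s) - L.weierstrassP (w₂ + s) = 0 := by
  have hev : ∀ w ∉ L.lattice, ∀ᶠ s in 𝓝 (0 : ℂ), w + s ∉ L.lattice := fun w hw => by
    have : ContinuousAt (fun s : ℂ => w + s) 0 := by fun_prop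
    exact this.eventually_mem (L.isClosed_lattice.isOpen_compl.mem_nhds (by simpa using hw))
  have hA : ∀ w ∉ L.lattice, AnalyticAt ℂ (fun s => L.weierstrassP (w + s)) 0 := fun w hw =>
    AnalyticAt.fun_comp (by simpa using L.analyticOnNhd_weierstrassP w hw) (by fun_prop)
  set d : ℂ → ℂ := fun s => L.weierstrassP (w₁ + s) - L.weierstrassP (w₂ + s) with hd
  have hdA : AnalyticAt ℂ d 0 := (hA w₁ h₁).sub (hA w₂ h₂)
  have hd1 : deriv d =ᶠ[𝓝 0]
      fun s => L.derivWeierstrassP (w₁ + s) - L.derivWeierstrassP (w₂ + s) := by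
    filter_upwards [hev w₁ h₁, hev w₂ h₂] with s hs1 hs2
    exact (((L.hasDerivAt_weierstrassP hs1).comp_const_add w₁ s).sub
      ((L.hasDerivAt_weierstrassP hs2).comp_const_add w₂ s)).deriv
  have hd2 : deriv (deriv d) =ᶠ[𝓝 0]
      (fun s => 6 * (L.weierstrassP (w₁ + s) + L.weierstrassP (w₂ + s))) * d := by
    refine hd1.deriv.trans ?_
    filter_upwards [hev w₁ h₁, hev w₂ h₂] with s hs1 hs2
    refine (((L.hasDerivAt_derivWeierstrassP hs1).comp_const_add w₁ s).sub
      ((L.hasDerivAt_derivWeierstrassP hs2).comp_const_add w₂ s)).deriv.trans ?_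
    simp only [Pi.mul_apply, hd]
    ring
  by_contra hne
  have hord : analyticOrderAt d 0 ≠ ⊤ := fun ht => hne (analyticOrderAt_eq_top.1 ht)
  obtain ⟨n, hn⟩ := ENat.ne_top_iff_exists.1 hord
  have hn0 : n ≠ 0 := by
    rintro rfl
    have := hdA.analyticOrderAt_eq_zero.1 hn.symm
    simp [hd, h] at this
  obtain ⟨k, rfl⟩ := Nat.exists_eq_succ_of_ne_zero hn0
  have hk := analyticOrderAt_deriv_of_pos hdA (n := k) (by rw [← hn]; simp)
  have hk0 : k ≠ 0 := by
    rintro rfl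
    have := hdA.deriv.analyticOrderAt_eq_zero.1 hk
    rw [hd1.self_of_nhds] at this
    simp [h'] at this
  obtain ⟨j, rfl⟩ := Nat.exists_eq_succ_of_ne_zero hk0
  have hj := analyticOrderAt_deriv_of_pos hdA.deriv (n := j) (by rw [hk]; simp)
  rw [analyticOrderAt_congr hd2, analyticOrderAt_mul (by
    have := hA w₁ h₁
    have := hA w₂ h₂
    fun_prop) hdA, ← hn] at hj
  have hle : ((j + 1 + 1 : ℕ) : ℕ∞) ≤ j := by
    rw [← hj]
    exact le_add_self
  have := Nat.cast_le.1 hle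
  omega

/-- A point of the torus `ℂ / L` is determined by the values of `℘` and its derivative. -/
lemma sub_mem_lattice_of_weierstrassP_eq {w₁ w₂ : ℂ} (h₁ : w₁ ∉ L.lattice) (h₂ : w₂ ∉ L.lattice)
    (h : L.weierstrassP w₁ = L.weierstrassP w₂)
    (h' : L.derivWeierstrassP w₁ = L.derivWeierstrassP w₂) : w₁ - w₂ ∈ L.lattice := by
  set S : Set ℂ := (fun s => w₁ + s) ⁻¹' L.lattice ∪ (fun s => w₂ + s) ⁻¹' L.lattice with hS
  have hcount : S.Countable :=
    (L.countable_lattice.preimage (add_right_injective w₁)).union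
      (L.countable_lattice.preimage (add_right_injective w₂))
  have hconn : IsPreconnected Sᶜ :=
    (hcount.isConnected_compl_of_one_lt_rank (by simp)).isPreconnected
  have hA : ∀ w : ℂ, ∀ s, w + s ∉ L.lattice →
      AnalyticAt ℂ (fun s => L.weierstrassP (w + s)) s := fun w s hw =>
    AnalyticAt.fun_comp (L.analyticOnNhd_weierstrassP (w + s) hw) (by fun_prop)
  have heq : Set.EqOn (fun s => L.weierstrassP (w₁ + s) - L.weierstrassP (w₂ + s)) 0 Sᶜ := by
    refine AnalyticOnNhd.eqOn_zero_of_preconnected_of_eventuallyEq_zero (𝕜 := ℂ) (z₀ := 0) ?_ hconn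
      ?_ (L.eventually_weierstrassP_add_eq h₁ h₂ h h')
    · intro s hs
      simp only [hS, Set.mem_compl_iff, Set.mem_union, not_or] at hs
      exact (hA w₁ s hs.1).sub (hA w₂ s hs.2)
    · simp [hS, h₁, h₂]
  by_contra hmem
  have hmem' : w₂ - w₁ ∉ L.lattice := fun hh => hmem (by simpa using neg_mem hh)
  have hc : ContinuousAt (fun z => L.weierstrassP (w₂ - w₁ + z)) 0 :=
    (hA (w₂ - w₁) 0 (by simpa using hmem')).continuousAt
  have h0 : Tendsto (fun z : ℂ => z ^ 2 * L.weierstrassP (w₂ - w₁ + z)) (𝓝[≠] 0) (𝓝 0) := by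
    have : ContinuousAt (fun z : ℂ => z ^ 2 * L.weierstrassP (w₂ - w₁ + z)) 0 := by fun_prop
    simpa using this.tendsto.mono_left nhdsWithin_le_nhds
  refine zero_ne_one (tendsto_nhds_unique h0 (L.tendsto_sq_mul_weierstrassP.congr' ?_))
  have hev : ∀ᶠ z in 𝓝 (0 : ℂ), w₂ - w₁ + z ∉ L.lattice := by
    have : ContinuousAt (fun s : ℂ => w₂ - w₁ + s) 0 := by fun_prop
    exact this.eventually_mem (L.isClosed_lattice.isOpen_compl.mem_nhds (by simpa using hmem'))
  filter_upwards [L.eventually_notMem_lattice, mem_nhdsWithin_of_mem_nhds hev] with z hz1 hz2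
  have := heq (x := z - w₁) (by
    simp only [hS, Set.mem_compl_iff, Set.mem_union, not_or, Set.mem_preimage]
    refine ⟨by simpa using hz1, fun hh => hz2 ?_⟩
    simpa [sub_add_eq_add_sub, add_sub_assoc] using hh)
  simp only [Pi.zero_apply, sub_eq_zero] at this
  rw [add_sub_cancel] at this
  rw [this]
  congr 2
  ring

lemma derivWeierstrassP_eq_zero_of_two_mul_mem {w : ℂ} (hw : 2 * w ∈ L.lattice) :
    L.derivWeierstrassP w = 0 := by
  have h := L.derivWeierstrassP_sub_coe w ⟨2 * w, hw⟩
  rw [show w - (2 * w : ℂ) = -w by ring, L.derivWeierstrassP_neg] at h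
  exact CharZero.neg_eq_self_iff.1 h

lemma two_mul_mem_of_derivWeierstrassP_eq_zero {w : ℂ} (hw : w ∉ L.lattice)
    (h : L.derivWeierstrassP w = 0) : 2 * w ∈ L.lattice := by
  have := L.sub_mem_lattice_of_weierstrassP_eq hw (w₂ := -w) (by simpa using hw)
    (L.weierstrassP_neg w).symm (by rw [L.derivWeierstrassP_neg, h, neg_zero])
  rwa [sub_neg_eq_add, ← two_mul] at this

end PeriodPair

/-! ### Real solutions of `p' ^ 2 = 4 (p - e₁) (p - e₂) (p - e₃)` with a pole at the origin -/

section RealCubic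

open Filter Topology Set

variable {p q : ℝ → ℝ} {c e₁ e₂ e₃ : ℝ}

lemma neg_and_lt_of_cubic (hc : 0 < c) (hp : ∀ u ∈ Ioo 0 c, HasDerivAt p (q u) u)
    (hq0 : ∀ u ∈ Ioo 0 c, q u ≠ 0) (hce : Tendsto p (𝓝[<] c) (𝓝 e₁))
    (hinf : Tendsto p (𝓝[>] 0) atTop) {u : ℝ} (hu : u ∈ Ioo 0 c) : q u < 0 ∧ e₁ < p u := by
  have hcont : ContinuousOn p (Ioo 0 c) := fun u hu => (hp u hu).continuousAt.continuousWithinAt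
  have h_int : interior (Ioo 0 c) = Ioo 0 c := isOpen_Ioo.interior_eq
  have hneg : ∀ u ∈ Ioo 0 c, q u < 0 := by
    refine (hasDerivWithinAt_forall_lt_or_forall_gt_of_forall_ne (convex_Ioo 0 c)
      (fun u hu => (hp u hu).hasDerivWithinAt) hq0).resolve_right fun hpos => ?_
    have hmono : StrictMonoOn p (Ioo 0 c) :=
      strictMonoOn_of_deriv_pos (convex_Ioo 0 c) hcont fun u hu => by
        rw [h_int] at hu
        rw [(hp u hu).deriv]
        exact hpos u hu
    obtain ⟨v, hv1, hv2⟩ := ((hinf.eventually_gt_atTop (p (c / 2))).and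
      (Ioo_mem_nhdsGT (half_pos hc))).exists
    exact lt_asymm hv1 (hmono ⟨hv2.1, hv2.2.trans (half_lt_self hc)⟩
      ⟨half_pos hc, half_lt_self hc⟩ hv2.2)
  have hanti : StrictAntiOn p (Ioo 0 c) :=
    strictAntiOn_of_deriv_neg (convex_Ioo 0 c) hcont fun u hu => by
      rw [h_int] at hu
      rw [(hp u hu).deriv]
      exact hneg u hu
  refine ⟨hneg u hu, ?_⟩
  obtain ⟨v, huv, hvc⟩ := exists_between hu.2
  have hv : v ∈ Ioo 0 c := ⟨hu.1.trans huv, hvc⟩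
  refine lt_of_le_of_lt (le_of_tendsto hce ?_) (hanti hu hv huv)
  filter_upwards [Ioo_mem_nhdsLT hvc] with w hw
  exact (hanti hv ⟨hv.1.trans hw.1, hw.2⟩ hw.1).le

lemma le_of_cubic (hc : 0 < c) (hp : ∀ u ∈ Ioo 0 c, HasDerivAt p (q u) u)
    (hq0 : ∀ u ∈ Ioo 0 c, q u ≠ 0) (hce : Tendsto p (𝓝[<] c) (𝓝 e₁))
    (hinf : Tendsto p (𝓝[>] 0) atTop) {e : ℝ}
    (he : ∀ u ∈ Ioo 0 c, p u = e → q u = 0) : e ≤ e₁ := by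
  by_contra! hlt
  obtain ⟨u, hu1, hu2⟩ := ((hinf.eventually_gt_atTop e).and (Ioo_mem_nhdsGT hc)).exists
  obtain ⟨v, hv1, hv2⟩ := ((hce.eventually_lt_const hlt).and (Ioo_mem_nhdsLT hc)).exists
  obtain ⟨w, hw, hwe⟩ := isPreconnected_Ioo.intermediate_value hv2 hu2
    (fun u hu => (hp u hu).continuousAt.continuousWithinAt) ⟨hv1.le, hu1.le⟩
  exact hq0 w hw (he w hw hwe)

lemma paramK_eq_of_cubic (hc : 0 < c) (hp : ∀ u ∈ Ioo 0 c, HasDerivAt p (q u) u)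
    (hq : ∀ u ∈ Ioo 0 c, q u ^ 2 = 4 * (p u - e₁) * (p u - e₂) * (p u - e₃))
    (hq0 : ∀ u ∈ Ioo 0 c, q u ≠ 0) (hce : Tendsto p (𝓝[<] c) (𝓝 e₁))
    (hinf : Tendsto p (𝓝[>] 0) atTop) (h₁₂ : e₂ < e₁) (h₂₃ : e₃ < e₂) :
    paramK ((e₂ - e₃) / (e₁ - e₃)) = c * √(e₁ - e₃) := by
  set m := (e₂ - e₃) / (e₁ - e₃) with hm
  have hD : 0 < e₁ - e₃ := by linarith
  have hm1 : m < 1 := by rw [hm, div_lt_one hD]; linarith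
  set F : ℝ → ℝ := fun t => ∫ x in (0:ℝ)..t, 1 / √(1 - m * Real.sin x ^ 2) with hF
  have hpos : ∀ x : ℝ, 0 < 1 - m * Real.sin x ^ 2 := one_sub_mul_sin_sq_pos hm1
  have hFc : Continuous fun x : ℝ => 1 / √(1 - m * Real.sin x ^ 2) :=
    continuous_const.div (by fun_prop) fun x => (Real.sqrt_pos.2 (hpos x)).ne'
  have hFd : ∀ t, HasDerivAt F (1 / √(1 - m * Real.sin t ^ 2)) t := fun t =>
    hFc.integral_hasStrictDerivAt 0 t |>.hasDerivAt
  set s : ℝ → ℝ := fun u => √((e₁ - e₃) / (p u - e₃)) with hs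
  set g : ℝ → ℝ := fun u => F (Real.arcsin (s u)) - √(e₁ - e₃) * u with hg
  have hgd : ∀ u ∈ Ioo 0 c, HasDerivAt g 0 u := by
    intro u hu
    obtain ⟨hneg, hlt⟩ := neg_and_lt_of_cubic hc hp hq0 hce hinf hu
    have h3 : 0 < p u - e₃ := by linarith
    have h2 : 0 < p u - e₂ := by linarith
    have h1 : 0 < p u - e₁ := by linarith
    have hquo : 0 < (e₁ - e₃) / (p u - e₃) := div_pos hD h3
    have hs0 : 0 < s u := Real.sqrt_pos.2 hquo
    have hs2 : s u ^ 2 = (e₁ - e₃) / (p u - e₃) := Real.sq_sqrt hquo.le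
    have hs1 : s u < 1 := by
      rw [hs, Real.sqrt_lt' one_pos, one_pow, div_lt_one h3]
      linarith
    have hd1 : HasDerivAt s _ u :=
      ((hasDerivAt_const u (e₁ - e₃)).fun_div ((hp u hu).sub_const e₃) h3.ne').sqrt hquo.ne'
    have hd2 := (hFd (Real.arcsin (s u))).comp u
      ((Real.hasDerivAt_arcsin (by linarith) hs1.ne).comp u hd1)
    refine (hd2.sub ((hasDerivAt_id u).const_mul (√(e₁ - e₃)))).congr_deriv ?_
    rw [Real.sin_arcsin (by linarith) hs1.le]
    have hA : 1 - m * s u ^ 2 = (p u - e₂) / (p u - e₃) := by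
      rw [hs2, hm]
      field_simp
      ring
    have hB : 1 - s u ^ 2 = (p u - e₁) / (p u - e₃) := by
      rw [hs2]
      field_simp
      ring
    have hqe : q u = -(2 * √(p u - e₁) * √(p u - e₂) * √(p u - e₃)) := by
      have : (2 * √(p u - e₁) * √(p u - e₂) * √(p u - e₃)) ^ 2 = (-q u) ^ 2 := by
        rw [neg_sq, hq u hu]
        simp only [mul_pow, Real.sq_sqrt h1.le, Real.sq_sqrt h2.le, Real.sq_sqrt h3.le]
        ring
      rw [(pow_left_inj₀ (by positivity) (by linarith) two_ne_zero).1 this]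
      ring
    have hsu : √((e₁ - e₃) / (p u - e₃)) = √(e₁ - e₃) / √(p u - e₃) := Real.sqrt_div hD.le _
    rw [hA, hB, hsu, hqe, Real.sqrt_div h2.le, Real.sqrt_div h1.le]
    have r1 := Real.sqrt_pos.2 h1
    have r2 := Real.sqrt_pos.2 h2
    have r3 := Real.sqrt_pos.2 h3
    have rD := Real.sqrt_pos.2 hD
    have t3 := Real.sq_sqrt h3.le
    have tD := Real.sq_sqrt hD.le
    generalize √(p u - e₁) = x1 at *
    generalize √(p u - e₂) = x2 at *
    generalize √(p u - e₃) = x3 at *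
    generalize √(e₁ - e₃) = xD at *
    rw [← t3, ← tD]
    field_simp
    ring
  have hFcont : Continuous F := continuous_iff_continuousAt.2 fun t => (hFd t).continuousAt
  have hlim0 : Tendsto g (𝓝[>] 0) (𝓝 0) := by
    have h1 : Tendsto s (𝓝[>] 0) (𝓝 0) := by
      have : Tendsto (fun u => (e₁ - e₃) / (p u - e₃)) (𝓝[>] 0) (𝓝 0) :=
        (tendsto_atTop_add_const_right _ (-e₃) hinf).const_div_atTop _
      have h := (Real.continuous_sqrt.tendsto 0).comp this
      rwa [Real.sqrt_zero] at h
    have h2 : Tendsto (fun u => F (Real.arcsin (s u))) (𝓝[>] 0) (𝓝 (F (Real.arcsin 0))) :=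
      ((hFcont.comp Real.continuous_arcsin).tendsto 0).comp h1
    have h3 : Tendsto (fun u : ℝ => √(e₁ - e₃) * u) (𝓝[>] 0) (𝓝 (√(e₁ - e₃) * 0)) :=
      (tendsto_const_nhds.mul tendsto_id).mono_left nhdsWithin_le_nhds
    have h4 := h2.sub h3
    have hF0 : F 0 = 0 := intervalIntegral.integral_same
    rwa [Real.arcsin_zero, hF0, mul_zero, sub_zero] at h4
  have hlimc : Tendsto g (𝓝[<] c) (𝓝 (paramK m - √(e₁ - e₃) * c)) := by
    have h1 : Tendsto s (𝓝[<] c) (𝓝 1) := by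
      have : Tendsto (fun u => (e₁ - e₃) / (p u - e₃)) (𝓝[<] c) (𝓝 1) := by
        rw [← div_self hD.ne']
        exact tendsto_const_nhds.div (hce.sub_const e₃) hD.ne'
      rw [← Real.sqrt_one]
      exact (Real.continuous_sqrt.tendsto 1).comp this
    have h2 : Tendsto (fun u => F (Real.arcsin (s u))) (𝓝[<] c) (𝓝 (F (Real.arcsin 1))) :=
      ((hFcont.comp Real.continuous_arcsin).tendsto 1).comp h1
    have h3 : Tendsto (fun u : ℝ => √(e₁ - e₃) * u) (𝓝[<] c) (𝓝 (√(e₁ - e₃) * c)) :=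
      (tendsto_const_nhds.mul tendsto_id).mono_left nhdsWithin_le_nhds
    rw [Real.arcsin_one] at h2
    exact h2.sub h3
  have hconst : ∀ u ∈ Ioo 0 c, g u = g (c / 2) := fun u hu =>
    isOpen_Ioo.is_const_of_deriv_eq_zero isPreconnected_Ioo
      (fun u hu => (hgd u hu).differentiableAt.differentiableWithinAt)
      (fun u hu => (hgd u hu).deriv) hu ⟨half_pos hc, half_lt_self hc⟩
  have e0 : g (c / 2) = 0 := tendsto_nhds_unique (tendsto_const_nhds.congr' (by
    filter_upwards [Ioo_mem_nhdsGT hc] with u hu using (hconst u hu).symm)) hlim0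
  have ec : g (c / 2) = paramK m - √(e₁ - e₃) * c :=
    tendsto_nhds_unique (tendsto_const_nhds.congr' (by
      filter_upwards [Ioo_mem_nhdsLT hc] with u hu using (hconst u hu).symm)) hlimc
  linarith

end RealCubic

/-! ### Rectangular lattices -/

namespace PeriodPair

open Filter Topology Set ComplexConjugate

section Symmetry

lemma weierstrassP_conj {L : PeriodPair} (hL : ∀ l ∈ L.lattice, conj l ∈ L.lattice) (z : ℂ) :
    L.weierstrassP (conj z) = conj (L.weierstrassP z) := by
  let e : L.lattice ≃ L.lattice :=
    ⟨fun l => ⟨conj l.1, hL _ l.2⟩, fun l => ⟨conj l.1, hL _ l.2⟩, fun l => by simp,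
      fun l => by simp⟩
  rw [weierstrassP, weierstrassP, Complex.conj_tsum, ← e.tsum_eq]
  refine tsum_congr fun l => ?_
  simp [e]

lemma derivWeierstrassP_conj {L : PeriodPair} (hL : ∀ l ∈ L.lattice, conj l ∈ L.lattice) (z : ℂ) :
    L.derivWeierstrassP (conj z) = conj (L.derivWeierstrassP z) := by
  let e : L.lattice ≃ L.lattice :=
    ⟨fun l => ⟨conj l.1, hL _ l.2⟩, fun l => ⟨conj l.1, hL _ l.2⟩, fun l => by simp,
      fun l => by simp⟩
  rw [derivWeierstrassP, derivWeierstrassP, map_neg, Complex.conj_tsum, ← e.tsum_eq]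
  congr 1
  refine tsum_congr fun l => ?_
  simp [e, map_ofNat]

lemma weierstrassP_I_mul {L M : PeriodPair}
    (h : ∀ l, l ∈ M.lattice ↔ Complex.I * l ∈ L.lattice) (z : ℂ) :
    L.weierstrassP (Complex.I * z) = -M.weierstrassP z := by
  let e : M.lattice ≃ L.lattice :=
    (Equiv.mulLeft₀ Complex.I Complex.I_ne_zero).subtypeEquiv h
  rw [weierstrassP, weierstrassP, ← e.tsum_eq, ← tsum_neg]
  refine tsum_congr fun l => ?_
  have : ((e l : L.lattice) : ℂ) = Complex.I * l := rfl
  rw [this, ← mul_sub, mul_pow, mul_pow, Complex.I_sq]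
  simp only [neg_mul, one_mul, one_div, inv_neg]
  ring

end Symmetry

lemma sum_eq_zero_of_cubic {e₁ e₂ e₃ g₂ g₃ : ℂ} (h₁ : 4 * e₁ ^ 3 - g₂ * e₁ - g₃ = 0)
    (h₂ : 4 * e₂ ^ 3 - g₂ * e₂ - g₃ = 0) (h₃ : 4 * e₃ ^ 3 - g₂ * e₃ - g₃ = 0)
    (h₁₂ : e₁ ≠ e₂) (h₁₃ : e₁ ≠ e₃) (h₂₃ : e₂ ≠ e₃) :
    e₃ = -e₁ - e₂ ∧ g₂ = 4 * (e₁ ^ 2 + e₁ * e₂ + e₂ ^ 2) ∧ g₃ = 4 * e₁ * e₂ * e₃ := by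
  have a₁ : g₂ = 4 * (e₁ ^ 2 + e₁ * e₂ + e₂ ^ 2) := by
    refine mul_left_cancel₀ (sub_ne_zero.2 h₁₂) ?_
    linear_combination h₂ - h₁
  have a₂ : g₂ = 4 * (e₁ ^ 2 + e₁ * e₃ + e₃ ^ 2) := by
    refine mul_left_cancel₀ (sub_ne_zero.2 h₁₃) ?_
    linear_combination h₃ - h₁
  have a₃ : e₃ = -e₁ - e₂ := by
    refine mul_left_cancel₀ (sub_ne_zero.2 h₂₃) ?_
    linear_combination (a₂ - a₁) / 4
  refine ⟨a₃, a₁, ?_⟩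
  rw [a₃]
  linear_combination -h₁ - e₁ * a₁

variable {a b : ℝ} (ha : 0 < a) (hb : 0 < b)

/-- The rectangular period pair `(a, b i)`. -/
noncomputable def rectPair (ha : 0 < a) (hb : 0 < b) : PeriodPair where
  ω₁ := a
  ω₂ := b * Complex.I
  indep := by
    rw [LinearIndependent.pair_iff]
    intro s t h
    have h1 := congrArg Complex.re h
    have h2 := congrArg Complex.im h
    simp at h1 h2
    exact ⟨h1.resolve_right ha.ne', h2.resolve_right hb.ne'⟩

lemma mem_lattice_rectPair {x : ℂ} :
    x ∈ (rectPair ha hb).lattice ↔ (∃ m : ℤ, x.re = m * a) ∧ ∃ n : ℤ, x.im = n * b := by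
  rw [mem_lattice]
  constructor
  · rintro ⟨m, n, rfl⟩
    exact ⟨⟨m, by simp [rectPair]⟩, ⟨n, by simp [rectPair]⟩⟩
  · rintro ⟨⟨m, hm⟩, n, hn⟩
    exact ⟨m, n, by apply Complex.ext <;> simp [rectPair, hm, hn]⟩

lemma conj_mem_lattice_rectPair {l : ℂ} (h : l ∈ (rectPair ha hb).lattice) :
    conj l ∈ (rectPair ha hb).lattice := by
  rw [mem_lattice_rectPair] at h ⊢
  obtain ⟨h1, n, hn⟩ := h
  exact ⟨by simpa using h1, -n, by simp [hn]⟩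

lemma mem_lattice_rectPair_iff_I_mul {l : ℂ} :
    l ∈ (rectPair hb ha).lattice ↔ Complex.I * l ∈ (rectPair ha hb).lattice := by
  rw [mem_lattice_rectPair, mem_lattice_rectPair]
  have : (∃ m : ℤ, -l.im = m * a) ↔ ∃ m : ℤ, l.im = m * a :=
    ⟨fun ⟨m, h⟩ => ⟨-m, by push_cast; linarith⟩, fun ⟨m, h⟩ => ⟨-m, by push_cast; linarith⟩⟩
  simp [this, and_comm]

lemma half_ne_int_mul (ha : 0 < a) (m : ℤ) : a / 2 ≠ m * a := by
  intro h
  have h2 : (1 : ℝ) = ((2 * m : ℤ) : ℝ) := by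
    push_cast
    refine mul_right_cancel₀ ha.ne' ?_
    linarith
  have h3 : (1 : ℤ) = 2 * m := by exact_mod_cast h2
  omega

lemma notMem_lattice_rectPair_of_re {x : ℂ} (h : x.re = a / 2) :
    x ∉ (rectPair ha hb).lattice := fun hx => by
  obtain ⟨m, hm⟩ := ((mem_lattice_rectPair ha hb).1 hx).1
  exact half_ne_int_mul ha m (h ▸ hm)

lemma notMem_lattice_rectPair_of_im {x : ℂ} (h : x.im = b / 2) :
    x ∉ (rectPair ha hb).lattice := fun hx => by
  obtain ⟨m, hm⟩ := ((mem_lattice_rectPair ha hb).1 hx).2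
  exact half_ne_int_mul hb m (h ▸ hm)

/-- The real value of `℘` at the half period `a / 2`. -/
noncomputable def rectE₁ (ha : 0 < a) (hb : 0 < b) : ℝ :=
  ((rectPair ha hb).weierstrassP ((a / 2 : ℝ) : ℂ)).re

/-- The real value of `℘` at the half period `(a + b i) / 2`. -/
noncomputable def rectE₂ (ha : 0 < a) (hb : 0 < b) : ℝ :=
  ((rectPair ha hb).weierstrassP ⟨a / 2, b / 2⟩).re

lemma weierstrassP_ofReal (t : ℝ) :
    (rectPair ha hb).weierstrassP t = (((rectPair ha hb).weierstrassP t).re : ℂ) := by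
  have := weierstrassP_conj (fun l => conj_mem_lattice_rectPair ha hb (l := l)) t
  rw [Complex.conj_ofReal] at this
  exact (Complex.conj_eq_iff_re.1 this.symm).symm

lemma derivWeierstrassP_ofReal (t : ℝ) :
    (rectPair ha hb).derivWeierstrassP t = (((rectPair ha hb).derivWeierstrassP t).re : ℂ) := by
  have := derivWeierstrassP_conj (fun l => conj_mem_lattice_rectPair ha hb (l := l)) t
  rw [Complex.conj_ofReal] at this
  exact (Complex.conj_eq_iff_re.1 this.symm).symm

lemma weierstrassP_half_add_half_conj :
    (rectPair ha hb).weierstrassP ⟨a / 2, -(b / 2)⟩ =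
      (rectPair ha hb).weierstrassP ⟨a / 2, b / 2⟩ := by
  have hl : (⟨0, b⟩ : ℂ) ∈ (rectPair ha hb).lattice :=
    (mem_lattice_rectPair ha hb).2 ⟨⟨0, by simp⟩, 1, by simp⟩
  rw [← (rectPair ha hb).weierstrassP_sub_coe ⟨a / 2, b / 2⟩ ⟨_, hl⟩]
  congr 1
  apply Complex.ext <;> simp
  ring

lemma weierstrassP_half_add_half :
    (rectPair ha hb).weierstrassP ⟨a / 2, b / 2⟩ = (rectE₂ ha hb : ℂ) := by
  have := weierstrassP_conj (fun l => conj_mem_lattice_rectPair ha hb (l := l)) ⟨a / 2, b / 2⟩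
  rw [show conj (⟨a / 2, b / 2⟩ : ℂ) = ⟨a / 2, -(b / 2)⟩ from rfl,
    weierstrassP_half_add_half_conj] at this
  exact (Complex.conj_eq_iff_re.1 this.symm).symm

lemma weierstrassP_half_I :
    (rectPair ha hb).weierstrassP ⟨0, b / 2⟩ = -(rectE₁ hb ha : ℂ) := by
  have := weierstrassP_I_mul (fun l => mem_lattice_rectPair_iff_I_mul ha hb (l := l)) (b / 2 : ℝ)
  rw [weierstrassP_ofReal hb ha] at this
  rw [rectE₁, ← this]
  congr 1
  apply Complex.ext <;> simp

lemma rectE₂_swap : rectE₂ hb ha = -rectE₂ ha hb := by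
  have := weierstrassP_I_mul (fun l => mem_lattice_rectPair_iff_I_mul ha hb (l := l))
    ⟨b / 2, -(a / 2)⟩
  rw [weierstrassP_half_add_half_conj, weierstrassP_half_add_half,
    show Complex.I * (⟨b / 2, -(a / 2)⟩ : ℂ) = ⟨a / 2, b / 2⟩ by apply Complex.ext <;> simp,
    weierstrassP_half_add_half] at this
  have h : ((rectE₂ ha hb : ℝ) : ℂ) = ((-rectE₂ hb ha : ℝ) : ℂ) := by simpa using this
  linarith [Complex.ofReal_injective h]

lemma derivWeierstrassP_half_eq_zero {w : ℂ} (h1 : ∃ m : ℤ, 2 * w.re = m * a)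
    (h2 : ∃ n : ℤ, 2 * w.im = n * b) : (rectPair ha hb).derivWeierstrassP w = 0 :=
  derivWeierstrassP_eq_zero_of_two_mul_mem _
    ((mem_lattice_rectPair ha hb).2 ⟨by simpa using h1, by simpa using h2⟩)

lemma rectE_relations :
    ((rectE₁ ha hb : ℂ) ≠ rectE₂ ha hb ∧ (rectE₁ ha hb : ℂ) ≠ -(rectE₁ hb ha : ℂ)) ∧
    -(rectE₁ hb ha : ℂ) = -(rectE₁ ha hb : ℂ) - rectE₂ ha hb ∧
    (rectPair ha hb).g₂ = 4 * ((rectE₁ ha hb : ℂ) ^ 2 + rectE₁ ha hb * rectE₂ ha hb +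
      (rectE₂ ha hb : ℂ) ^ 2) ∧
    (rectPair ha hb).g₃ = 4 * rectE₁ ha hb * rectE₂ ha hb * -(rectE₁ hb ha : ℂ) := by
  set L := rectPair ha hb with hL
  have n1 : ((a / 2 : ℝ) : ℂ) ∉ L.lattice := notMem_lattice_rectPair_of_re ha hb (by simp)
  have n2 : (⟨a / 2, b / 2⟩ : ℂ) ∉ L.lattice := notMem_lattice_rectPair_of_re ha hb rfl
  have n3 : (⟨0, b / 2⟩ : ℂ) ∉ L.lattice := notMem_lattice_rectPair_of_im ha hb rfl
  have d1 : L.derivWeierstrassP ((a / 2 : ℝ) : ℂ) = 0 :=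
    derivWeierstrassP_half_eq_zero ha hb ⟨1, by simp; ring⟩ ⟨0, by simp⟩
  have d2 : L.derivWeierstrassP ⟨a / 2, b / 2⟩ = 0 :=
    derivWeierstrassP_half_eq_zero ha hb ⟨1, by simp; ring⟩ ⟨1, by simp; ring⟩
  have d3 : L.derivWeierstrassP ⟨0, b / 2⟩ = 0 :=
    derivWeierstrassP_half_eq_zero ha hb ⟨0, by simp⟩ ⟨1, by simp; ring⟩
  have p1 : L.weierstrassP ((a / 2 : ℝ) : ℂ) = rectE₁ ha hb := weierstrassP_ofReal ha hb _
  have p2 : L.weierstrassP ⟨a / 2, b / 2⟩ = rectE₂ ha hb := weierstrassP_half_add_half ha hb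
  have p3 : L.weierstrassP ⟨0, b / 2⟩ = -(rectE₁ hb ha : ℂ) := weierstrassP_half_I ha hb
  have h12 : (rectE₁ ha hb : ℂ) ≠ rectE₂ ha hb := fun h => by
    have := L.sub_mem_lattice_of_weierstrassP_eq n2 n1 (by rw [p1, p2, h]) (by rw [d1, d2])
    exact notMem_lattice_rectPair_of_im ha hb (by simp) this
  have h13 : (rectE₁ ha hb : ℂ) ≠ -(rectE₁ hb ha : ℂ) := fun h => by
    have := L.sub_mem_lattice_of_weierstrassP_eq n3 n1 (by rw [p1, p3, h]) (by rw [d1, d3])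
    exact notMem_lattice_rectPair_of_im ha hb (by simp) this
  have h23 : (rectE₂ ha hb : ℂ) ≠ -(rectE₁ hb ha : ℂ) := fun h => by
    have := L.sub_mem_lattice_of_weierstrassP_eq n2 n3 (by rw [p2, p3, h]) (by rw [d3, d2])
    exact notMem_lattice_rectPair_of_re ha hb (by simp) this
  have s1 := L.derivWeierstrassP_sq _ n1
  have s2 := L.derivWeierstrassP_sq _ n2
  have s3 := L.derivWeierstrassP_sq _ n3
  rw [d1, p1] at s1
  rw [d2, p2] at s2
  rw [d3, p3] at s3
  exact ⟨⟨h12, h13⟩, sum_eq_zero_of_cubic (by linear_combination -s1) (by linear_combination -s2)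
    (by linear_combination -s3) h12 h13 h23⟩

lemma ofReal_notMem_lattice_rectPair {u : ℝ} (hu : u ∈ Ioo 0 a) :
    (u : ℂ) ∉ (rectPair ha hb).lattice := fun h => by
  obtain ⟨m, hm⟩ := ((mem_lattice_rectPair ha hb).1 h).1
  rw [Complex.ofReal_re] at hm
  have h1 : (0 : ℝ) < m := by
    by_contra! hle
    nlinarith [hu.1]
  have h2 : (m : ℝ) < 1 := by
    by_contra! hle
    nlinarith [hu.2]
  have h3 : (0 : ℤ) < m := by exact_mod_cast h1
  have h4 : m < (1 : ℤ) := by exact_mod_cast h2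
  omega

end PeriodPair

/-! ### The complete elliptic integral as a half period -/

namespace PeriodPair

open Filter Topology Set

variable {a b : ℝ} (ha : 0 < a) (hb : 0 < b)

lemma hasDerivAt_re_weierstrassP {u : ℝ} (hu : u ∈ Ioo 0 a) :
    HasDerivAt (fun t : ℝ => ((rectPair ha hb).weierstrassP t).re)
      ((rectPair ha hb).derivWeierstrassP u).re u :=
  ((rectPair ha hb).hasDerivAt_weierstrassP
    (ofReal_notMem_lattice_rectPair ha hb hu)).real_of_complex

lemma derivWeierstrassP_re_ne_zero {u : ℝ} (hu : u ∈ Ioo 0 (a / 2)) :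
    ((rectPair ha hb).derivWeierstrassP u).re ≠ 0 := by
  intro h
  have h0 : (rectPair ha hb).derivWeierstrassP u = 0 := by
    rw [derivWeierstrassP_ofReal, h, Complex.ofReal_zero]
  have hmem := two_mul_mem_of_derivWeierstrassP_eq_zero _
    (ofReal_notMem_lattice_rectPair ha hb ⟨hu.1, by linarith [hu.1, hu.2]⟩) h0
  refine ofReal_notMem_lattice_rectPair ha hb (u := 2 * u) ⟨by linarith [hu.1],
    by linarith [hu.2]⟩ ?_
  simpa using hmem

lemma derivWeierstrassP_re_sq {u : ℝ} (hu : u ∈ Ioo 0 a) :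
    ((rectPair ha hb).derivWeierstrassP u).re ^ 2 =
      4 * (((rectPair ha hb).weierstrassP u).re - rectE₁ ha hb) *
        (((rectPair ha hb).weierstrassP u).re - rectE₂ ha hb) *
        (((rectPair ha hb).weierstrassP u).re - -rectE₁ hb ha) := by
  have h := (rectPair ha hb).derivWeierstrassP_sq u (ofReal_notMem_lattice_rectPair ha hb hu)
  obtain ⟨-, h3, hg2, hg3⟩ := rectE_relations ha hb
  rw [weierstrassP_ofReal, derivWeierstrassP_ofReal, hg2, hg3, h3] at h
  apply Complex.ofReal_injective
  push_cast
  rw [h, h3]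
  ring

lemma tendsto_re_weierstrassP_half :
    Tendsto (fun t : ℝ => ((rectPair ha hb).weierstrassP t).re) (𝓝[<] (a / 2))
      (𝓝 (rectE₁ ha hb)) :=
  (hasDerivAt_re_weierstrassP ha hb (u := a / 2) ⟨half_pos ha, half_lt_self ha⟩).continuousAt.tendsto
    |>.mono_left nhdsWithin_le_nhds

lemma tendsto_re_weierstrassP_atTop :
    Tendsto (fun t : ℝ => ((rectPair ha hb).weierstrassP t).re) (𝓝[>] 0) atTop := by
  have h0 : Tendsto (fun t : ℝ => (t : ℂ)) (𝓝[>] 0) (𝓝[≠] 0) := by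
    refine tendsto_nhdsWithin_iff.2 ⟨?_, ?_⟩
    · have := Complex.continuous_ofReal.tendsto 0
      rw [Complex.ofReal_zero] at this
      exact this.mono_left nhdsWithin_le_nhds
    · filter_upwards [self_mem_nhdsWithin] with t ht
      simpa using (ne_of_gt ht : t ≠ 0)
  have h1 : Tendsto (fun t : ℝ => t ^ 2 * ((rectPair ha hb).weierstrassP t).re) (𝓝[>] 0) (𝓝 1) := by
    have := (Complex.continuous_re.tendsto 1).comp
      ((rectPair ha hb).tendsto_sq_mul_weierstrassP.comp h0)
    refine this.congr fun t => ?_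
    rw [Function.comp_apply, Function.comp_apply, ← Complex.ofReal_pow, Complex.re_ofReal_mul]
  have h2 : Tendsto (fun t : ℝ => (t ^ 2)⁻¹) (𝓝[>] 0) atTop := by
    have := (tendsto_pow_atTop (α := ℝ) two_ne_zero).comp (tendsto_inv_nhdsGT_zero (𝕜 := ℝ))
    exact this.congr fun t => by simp
  refine (h2.atTop_mul_pos one_pos h1).congr' ?_
  filter_upwards [self_mem_nhdsWithin] with t ht
  have : t ≠ 0 := ne_of_gt ht
  field_simp

lemma rectE₂_lt_rectE₁ : rectE₂ ha hb < rectE₁ ha hb := by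
  refine lt_of_le_of_ne (le_of_cubic (half_pos ha)
    (fun u hu => hasDerivAt_re_weierstrassP ha hb ⟨hu.1, by linarith [hu.1, hu.2]⟩)
    (fun u hu => derivWeierstrassP_re_ne_zero ha hb hu) (tendsto_re_weierstrassP_half ha hb)
    (tendsto_re_weierstrassP_atTop ha hb) fun u hu h => ?_) fun h =>
      (rectE_relations ha hb).1.1 (by rw [h])
  have := derivWeierstrassP_re_sq ha hb (u := u) ⟨hu.1, by linarith [hu.1, hu.2]⟩
  rw [h, sub_self, mul_zero, zero_mul] at this
  exact pow_eq_zero_iff two_ne_zero |>.1 this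

lemma neg_rectE₁_lt_rectE₂ : -rectE₁ hb ha < rectE₂ ha hb := by
  have := rectE₂_lt_rectE₁ hb ha
  rw [rectE₂_swap ha hb] at this
  linarith

lemma paramK_rect :
    paramK ((rectE₂ ha hb + rectE₁ hb ha) / (rectE₁ ha hb + rectE₁ hb ha)) =
      a / 2 * √(rectE₁ ha hb + rectE₁ hb ha) := by
  have := paramK_eq_of_cubic (half_pos ha)
    (fun u hu => hasDerivAt_re_weierstrassP ha hb ⟨hu.1, by linarith [hu.1, hu.2]⟩)
    (fun u hu => derivWeierstrassP_re_sq ha hb ⟨hu.1, by linarith [hu.1, hu.2]⟩)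
    (fun u hu => derivWeierstrassP_re_ne_zero ha hb hu) (tendsto_re_weierstrassP_half ha hb)
    (tendsto_re_weierstrassP_atTop ha hb) (rectE₂_lt_rectE₁ ha hb) (neg_rectE₁_lt_rectE₂ ha hb)
  simpa only [sub_neg_eq_add] using this

lemma rectE_mul_eq_sumInvPow :
    (rectE₁ ha hb - rectE₂ ha hb) * (rectE₂ ha hb + rectE₁ hb ha) =
      -3 * ((rectPair ha hb).sumInvPow ⟨a / 2, b / 2⟩ 4).re := by
  have h := (rectPair ha hb).deriv_derivWeierstrassP_eq_sumInvPow
    (notMem_lattice_rectPair_of_re ha hb (x := ⟨a / 2, b / 2⟩) rfl)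
  obtain ⟨-, h3, hg2, -⟩ := rectE_relations ha hb
  rw [weierstrassP_half_add_half, hg2] at h
  have h4 : (((rectE₁ ha hb - rectE₂ ha hb) * (rectE₂ ha hb + rectE₁ hb ha) : ℝ) : ℂ) =
      ((-3 : ℝ) : ℂ) * (rectPair ha hb).sumInvPow ⟨a / 2, b / 2⟩ 4 := by
    push_cast
    linear_combination -h / 2 - (rectE₁ ha hb - rectE₂ ha hb : ℂ) * h3
  have h5 := congrArg Complex.re h4
  rwa [Complex.ofReal_re, Complex.re_ofReal_mul] at h5

/-- Every positive `y` is the period ratio of some parameter `m`. -/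
lemma exists_paramK_ratio_eq {y : ℝ} (hy : 0 < y) : ∃ m ∈ Ioo (0 : ℝ) 1,
    paramK (1 - m) / paramK m = y ∧ 16 * (m * (1 - m) * paramK m ^ 4) =
      -3 * ((rectPair one_pos hy).sumInvPow ⟨1 / 2, y / 2⟩ 4).re := by
  have h12 := rectE₂_lt_rectE₁ one_pos hy
  have h23 := neg_rectE₁_lt_rectE₂ one_pos hy
  have hD : 0 < rectE₁ one_pos hy + rectE₁ hy one_pos := by linarith
  have hK := paramK_rect one_pos hy
  have hK' := paramK_rect hy one_pos
  rw [rectE₂_swap one_pos hy, add_comm (rectE₁ hy one_pos)] at hK'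
  set D := rectE₁ one_pos hy + rectE₁ hy one_pos with hDdef
  set m := (rectE₂ one_pos hy + rectE₁ hy one_pos) / D with hm
  have h1m : 1 - m = (-rectE₂ one_pos hy + rectE₁ one_pos hy) / D := by
    rw [hm, eq_div_iff hD.ne', sub_mul, div_mul_cancel₀ _ hD.ne']
    linarith
  have hs := Real.sqrt_pos.2 hD
  refine ⟨m, ⟨div_pos (by linarith) hD, by rw [hm, div_lt_one hD]; linarith⟩, ?_, ?_⟩
  · rw [h1m, hK, hK']
    field_simp
  · rw [← rectE_mul_eq_sumInvPow, hK, h1m, mul_pow, show √D ^ 4 = (√D ^ 2) ^ 2 by ring,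
      Real.sq_sqrt hD.le, hm]
    field_simp
    ring

end PeriodPair

/-! ### The lattice sum `∑ 1 / (l - w) ^ 4` at `w = (1 + y i) / 2`, summed along rows -/

section QuarticSum

open Filter Topology Set ComplexConjugate

/-- The closed form of `∑_{m ∈ ℤ} 1 / (m + 1 / 2 + t i) ^ 4` for `0 < t`. -/
noncomputable def quarticSum (t : ℝ) : ℝ :=
  -(8 * π ^ 4 / 3) * (Real.exp (-(2 * π * t)) *
    (1 - 4 * Real.exp (-(2 * π * t)) + Real.exp (-(2 * π * t)) ^ 2) /
      (1 + Real.exp (-(2 * π * t))) ^ 4)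

lemma hasSum_cube_mul_geometric {r : ℂ} (hr : ‖r‖ < 1) :
    HasSum (fun n : ℕ => (n : ℂ) ^ 3 * r ^ n) (r * (1 + 4 * r + r ^ 2) / (1 - r) ^ 4) := by
  have h := (((hasSum_choose_mul_geometric_of_norm_lt_one 3 hr).mul_left 6).sub
    ((hasSum_choose_mul_geometric_of_norm_lt_one 2 hr).mul_left 12)).add
    (((hasSum_choose_mul_geometric_of_norm_lt_one 1 hr).mul_left 7).sub
    (hasSum_choose_mul_geometric_of_norm_lt_one 0 hr))
  have hr1 : 1 - r ≠ 0 := fun h => by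
    rw [← sub_eq_zero.1 h] at hr
    simp at hr
  convert h using 1
  · rfl
  · funext n
    have h3 := congrArg (Nat.cast (R := ℂ)) (Nat.ascFactorial_eq_factorial_mul_choose n 3)
    have h2 := congrArg (Nat.cast (R := ℂ)) (Nat.ascFactorial_eq_factorial_mul_choose n 2)
    simp only [Nat.ascFactorial, Nat.factorial] at h3 h2
    push_cast at h3 h2
    have h1 : (((n + 1).choose 1 : ℕ) : ℂ) = n + 1 := by simp
    have h0 : (((n + 0).choose 0 : ℕ) : ℂ) = 1 := by simp
    rw [h1, h0]
    linear_combination r ^ n * (h3 - 6 * h2)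
  · field_simp
    ring

lemma tsum_one_div_add_int_pow_four {t : ℝ} (ht : 0 < t) :
    ∑' m : ℤ, 1 / ((⟨1 / 2, t⟩ : ℂ) + m) ^ 4 = (quarticSum t : ℂ) := by
  have h := EisensteinSeries.qExpansion_identity (k := 3) (by norm_num) ⟨⟨1 / 2, t⟩, ht⟩
  have hq : Complex.exp (2 * π * Complex.I * (⟨1 / 2, t⟩ : ℂ)) =
      ((-Real.exp (-(2 * π * t)) : ℝ) : ℂ) := by
    have : 2 * π * Complex.I * (⟨1 / 2, t⟩ : ℂ) = ((-(2 * π * t) : ℝ) : ℂ) + π * Complex.I := by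
      apply Complex.ext <;> simp
      ring
    rw [this, Complex.exp_add, Complex.exp_pi_mul_I]
    simp
  have hu : Real.exp (-(2 * π * t)) < 1 := Real.exp_lt_one_iff.2 (by have := Real.pi_pos; nlinarith)
  have hr : ‖((-Real.exp (-(2 * π * t)) : ℝ) : ℂ)‖ < 1 := by
    rw [Complex.norm_real, norm_neg, Real.norm_of_nonneg (Real.exp_pos _).le]
    exact hu
  have h' : ∑' m : ℤ, 1 / ((⟨1 / 2, t⟩ : ℂ) + m) ^ 4 = _ := h
  rw [h']
  rw [hq, (hasSum_cube_mul_geometric hr).tsum_eq, quarticSum]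
  have hI : (-2 * (π : ℂ) * Complex.I) ^ (3 + 1) = 16 * π ^ 4 := by
    rw [mul_pow, show 3 + 1 = 4 from rfl, Complex.I_pow_four]
    ring
  rw [hI]
  push_cast
  simp only [Nat.factorial]
  push_cast
  ring

lemma PeriodPair.hasSum_sumInvPow_rectPair {y : ℝ} (hy : 0 < y) :
    HasSum (fun n : ℕ => 2 * quarticSum ((n + 1 / 2) * y))
      ((PeriodPair.rectPair one_pos hy).sumInvPow ⟨1 / 2, y / 2⟩ 4).re := by
  set L := PeriodPair.rectPair one_pos hy with hL
  have h := L.hasSum_sumInvPow ⟨1 / 2, y / 2⟩ (r := 4) (by norm_num)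
  let e : ℤ × ℤ ≃ L.lattice :=
    (Equiv.prodComm ℤ ℤ).trans (L.latticeEquivProd.symm.toEquiv.trans (Equiv.neg _))
  have he : ∀ x : ℤ × ℤ, ((e x : L.lattice) : ℂ) = -(x.2 + x.1 * (y * Complex.I)) := by
    intro x
    have : ((e x : L.lattice) : ℂ) = -((L.latticeEquivProd.symm (x.2, x.1)).1 : ℂ) := rfl
    rw [this, L.latticeEquiv_symm_apply]
    simp [hL, PeriodPair.rectPair]
  have h1 : HasSum (fun x : ℤ × ℤ => 1 / ((⟨1 / 2, (x.1 + 1 / 2) * y⟩ : ℂ) + x.2) ^ 4)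
      (L.sumInvPow ⟨1 / 2, y / 2⟩ 4) := by
    rw [← e.hasSum_iff] at h
    convert h using 1
    funext x
    rw [Function.comp_apply, he, one_div]
    congr 1
    rw [← Even.neg_pow (by decide : Even 4)]
    congr 1
    apply Complex.ext <;> simp <;> ring
  have h2 := (h1.prod_fiberwise fun n => (h1.summable.prod_factor n).hasSum).nat_add_neg_add_one
  convert Complex.hasSum_re h2 using 1
  funext n
  have hn : 0 < ((n : ℝ) + 1 / 2) * y := by positivity
  have e1 := tsum_one_div_add_int_pow_four hn
  have e2 := congrArg conj e1
  rw [Complex.conj_tsum, Complex.conj_ofReal] at e2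
  have e3 : ∑' m : ℤ, 1 / ((⟨1 / 2, (((-(n + 1) : ℤ) : ℝ) + 1 / 2) * y⟩ : ℂ) + m) ^ 4 =
      (quarticSum ((n + 1 / 2) * y) : ℂ) := by
    rw [← e2]
    refine tsum_congr fun m => ?_
    rw [map_div₀, map_pow, map_add, map_one, map_intCast]
    congr 3
    apply Complex.ext
    · simp
    · simp
      ring
  simp only [Int.cast_natCast]
  rw [e1, e3]
  simp
  ring

end QuarticSum

/-! ### The Mellin transform of the row sums at `4` -/

section QuarticSumIntegral

open Filter Topology Set

lemma norm_pow_three_mul_quarticSum_le {t : ℝ} (ht : 0 < t) :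
    ‖t ^ 3 * quarticSum t‖ ≤
      (8 * π ^ 4 / 3) * (t ^ (3 : ℝ) * Real.exp (-(2 * π) * t ^ (1 : ℝ))) := by
  rw [Real.rpow_one, show t ^ (3 : ℝ) = t ^ 3 by exact_mod_cast Real.rpow_natCast t 3,
    show -(2 * π) * t = -(2 * π * t) by ring, quarticSum]
  set u := Real.exp (-(2 * π * t)) with hu
  have hu0 : 0 < u := Real.exp_pos _
  have hq : |(1 - 4 * u + u ^ 2) / (1 + u) ^ 4| ≤ 1 := by
    rw [abs_div, abs_of_pos (by positivity : 0 < (1 + u) ^ 4), div_le_one (by positivity), abs_le]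
    have h3 := pow_pos hu0 3
    have h4 := pow_pos hu0 4
    have h2 := pow_pos hu0 2
    constructor <;> nlinarith
  have : t ^ 3 * (-(8 * π ^ 4 / 3) * (u * (1 - 4 * u + u ^ 2) / (1 + u) ^ 4)) =
      -((8 * π ^ 4 / 3) * (t ^ 3 * u)) * ((1 - 4 * u + u ^ 2) / (1 + u) ^ 4) := by ring
  rw [this, norm_mul, norm_neg, Real.norm_of_nonneg (by positivity), Real.norm_eq_abs]
  exact mul_le_of_le_one_right (by positivity) hq

lemma continuous_quarticSum : Continuous quarticSum := by
  unfold quarticSum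
  refine continuous_const.mul (Continuous.div (by fun_prop) (by fun_prop) fun t => ?_)
  positivity

lemma integrableOn_pow_three_mul_quarticSum :
    IntegrableOn (fun t : ℝ => t ^ 3 * quarticSum t) (Ioi 0) := by
  refine Integrable.mono' ((integrableOn_rpow_mul_exp_neg_mul_rpow (s := 3) (p := 1) (b := 2 * π)
    (by norm_num) one_pos (by positivity)).const_mul (8 * π ^ 4 / 3)) ?_ ?_
  · exact ((continuous_pow 3).mul continuous_quarticSum).aestronglyMeasurable
  · filter_upwards [ae_restrict_mem measurableSet_Ioi] with t ht
    exact norm_pow_three_mul_quarticSum_le ht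

lemma tendsto_pow_mul_exp_mul_comp (n : ℕ) {h : ℝ → ℝ} (hh : ContinuousAt h 0) :
    Tendsto (fun t : ℝ => t ^ n * Real.exp (-(2 * π * t)) * h (Real.exp (-(2 * π * t)))) atTop
      (𝓝 0) := by
  have h2 : Tendsto (fun t : ℝ => 2 * π * t) atTop atTop :=
    tendsto_id.const_mul_atTop Real.two_pi_pos
  have h0 : Tendsto (fun t : ℝ => Real.exp (-(2 * π * t))) atTop (𝓝 0) :=
    Real.tendsto_exp_neg_atTop_nhds_zero.comp h2
  have h1 : Tendsto (fun t : ℝ => t ^ n * Real.exp (-(2 * π * t))) atTop (𝓝 0) := by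
    have := ((Real.tendsto_pow_mul_exp_neg_atTop_nhds_zero n).comp h2).const_mul ((2 * π) ^ n)⁻¹
    rw [mul_zero] at this
    refine this.congr fun t => ?_
    have := pow_pos Real.two_pi_pos n
    rw [Function.comp_apply, mul_pow _ t]
    exact (congrArg _ (mul_assoc _ _ _)).trans (inv_mul_cancel_left₀ this.ne' _)
  have := h1.mul (hh.tendsto.comp h0)
  rwa [zero_mul] at this

lemma integral_pow_three_mul_quarticSum :
    ∫ t in Ioi (0 : ℝ), t ^ 3 * quarticSum t = -Real.log 2 := by
  set A : ℝ → ℝ := fun t => (8 * π ^ 4 / 3) *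
    (t ^ 3 * Real.exp (-(2 * π * t)) * ((1 - Real.exp (-(2 * π * t))) /
        (1 + Real.exp (-(2 * π * t))) ^ 3) / (2 * π) +
      3 * (t ^ 2 * Real.exp (-(2 * π * t)) * (1 / (1 + Real.exp (-(2 * π * t))) ^ 2)) /
        (2 * π) ^ 2 +
      6 * (t ^ 1 * Real.exp (-(2 * π * t)) * (1 / (1 + Real.exp (-(2 * π * t))))) / (2 * π) ^ 3 +
      6 * Real.log (1 + Real.exp (-(2 * π * t))) / (2 * π) ^ 4) with hA
  have hderiv : ∀ t, HasDerivAt A (t ^ 3 * quarticSum t) t := by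
    intro t
    have hu : HasDerivAt (fun t : ℝ => Real.exp (-(2 * π * t)))
        (-(2 * π) * Real.exp (-(2 * π * t))) t := by
      have := (((hasDerivAt_id t).const_mul (2 * π)).fun_neg).exp
      refine this.congr_deriv ?_
      simp only [id, mul_one]
      ring_nf
    have hpos : 0 < 1 + Real.exp (-(2 * π * t)) := by positivity
    have hp := hu.const_add 1
    have d1 := (((hasDerivAt_pow 3 t).fun_mul hu).fun_mul
      ((hu.const_sub 1).fun_div (hp.fun_pow 3) (pow_pos hpos 3).ne')).div_const (2 * π)
    have d2 := ((((hasDerivAt_pow 2 t).fun_mul hu).fun_mul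
      ((hasDerivAt_const t (1 : ℝ)).fun_div (hp.fun_pow 2) (pow_pos hpos 2).ne')).const_mul
        3).div_const ((2 * π) ^ 2)
    have d3 := ((((hasDerivAt_pow 1 t).fun_mul hu).fun_mul
      ((hasDerivAt_const t (1 : ℝ)).fun_div hp hpos.ne')).const_mul 6).div_const ((2 * π) ^ 3)
    have d4 := ((hp.log hpos.ne').const_mul 6).div_const ((2 * π) ^ 4)
    refine ((((d1.fun_add d2).fun_add d3).fun_add d4).const_mul (8 * π ^ 4 / 3)).congr_deriv ?_
    rw [quarticSum]
    have hpi := Real.pi_pos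
    generalize Real.exp (-(2 * π * t)) = u at *
    push_cast
    field_simp
    ring
  have hlim : Tendsto A atTop (𝓝 0) := by
    have t3 := (tendsto_pow_mul_exp_mul_comp 3 (h := fun u => (1 - u) / (1 + u) ^ 3)
      (by fun_prop (disch := norm_num))).div_const (2 * π)
    have t2 := ((tendsto_pow_mul_exp_mul_comp 2 (h := fun u => 1 / (1 + u) ^ 2)
      (by fun_prop (disch := norm_num))).const_mul 3).div_const ((2 * π) ^ 2)
    have t1 := ((tendsto_pow_mul_exp_mul_comp 1 (h := fun u => 1 / (1 + u))
      (by fun_prop (disch := norm_num))).const_mul 6).div_const ((2 * π) ^ 3)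
    have t0 : Tendsto (fun t : ℝ => 6 * Real.log (1 + Real.exp (-(2 * π * t))) / (2 * π) ^ 4) atTop
        (𝓝 (6 * Real.log (1 + 0) / (2 * π) ^ 4)) := by
      have h0 : Tendsto (fun t : ℝ => Real.exp (-(2 * π * t))) atTop (𝓝 0) :=
        Real.tendsto_exp_neg_atTop_nhds_zero.comp (tendsto_id.const_mul_atTop Real.two_pi_pos)
      exact (((h0.const_add 1).log (by norm_num)).const_mul 6).div_const _
    have := (((t3.add t2).add t1).add t0).const_mul (8 * π ^ 4 / 3)
    have hz : (8 * π ^ 4 / 3) * (0 / (2 * π) + 3 * 0 / (2 * π) ^ 2 + 6 * 0 / (2 * π) ^ 3 +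
        6 * Real.log (1 + 0) / (2 * π) ^ 4) = 0 := by simp
    rwa [hz] at this
  rw [integral_Ioi_of_hasDerivAt_of_tendsto (hderiv 0).continuousAt.continuousWithinAt
    (fun t _ => hderiv t) integrableOn_pow_three_mul_quarticSum hlim, hA]
  have hpi := Real.pi_pos
  norm_num
  field_simp
  norm_num

lemma hasSum_one_div_add_half_pow_four :
    HasSum (fun n : ℕ => 1 / ((n : ℝ) + 1 / 2) ^ 4) (π ^ 4 / 6) := by
  have h := hasSum_zeta_four
  have he : HasSum (fun n : ℕ => 1 / ((2 * n : ℕ) : ℝ) ^ 4) (1 / 16 * (π ^ 4 / 90)) := by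
    refine (h.mul_left (1 / 16)).congr_fun fun n => ?_
    push_cast
    ring
  obtain ⟨S, ho⟩ : Summable (fun n : ℕ => 1 / ((2 * n + 1 : ℕ) : ℝ) ^ 4) :=
    h.summable.comp_injective (i := fun n : ℕ => 2 * n + 1) (fun m n hmn => by simpa using hmn)
  have hS : S = π ^ 4 / 96 := by
    have := (HasSum.even_add_odd (f := fun n : ℕ => 1 / (n : ℝ) ^ 4) he ho).unique h
    linarith
  have hv : π ^ 4 / 6 = 16 * S := by rw [hS]; ring
  rw [hv]
  refine (ho.mul_left 16).congr_fun fun n => ?_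
  push_cast
  field_simp
  ring

lemma integral_pow_three_mul_sumInvPow {h : ℝ → ℝ}
    (hh : ∀ y, 0 < y → HasSum (fun n : ℕ => 2 * quarticSum ((n + 1 / 2) * y)) (h y)) :
    ∫ y in Ioi (0 : ℝ), y ^ 3 * h y = -(π ^ 4 / 3 * Real.log 2) := by
  set F : ℕ → ℝ → ℝ := fun n y => y ^ 3 * (2 * quarticSum ((n + 1 / 2) * y)) with hF
  set G : ℝ → ℝ := fun t => t ^ 3 * quarticSum t with hG
  have hc : ∀ n : ℕ, (0 : ℝ) < n + 1 / 2 := fun n => by positivity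
  have hFG : ∀ (n : ℕ) (y : ℝ), F n y = 2 / (n + 1 / 2) ^ 3 * G ((n + 1 / 2) * y) := by
    intro n y
    have := hc n
    simp only [hF, hG]
    field_simp
  have h_int : ∀ n : ℕ, IntegrableOn (F n) (Ioi 0) := by
    intro n
    have : IntegrableOn (fun y => G ((n + 1 / 2) * y)) (Ioi 0) := by
      rw [integrableOn_Ioi_comp_mul_left_iff _ _ (hc n), mul_zero]
      exact integrableOn_pow_three_mul_quarticSum
    exact (this.const_mul (2 / ((n : ℝ) + 1 / 2) ^ 3)).congr
      (Eventually.of_forall fun y => (hFG n y).symm)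
  have hval : ∀ n : ℕ, ∫ y in Ioi (0 : ℝ), F n y =
      1 / ((n : ℝ) + 1 / 2) ^ 4 * (2 * ∫ t in Ioi (0 : ℝ), G t) := by
    intro n
    have := hc n
    simp only [hFG]
    rw [integral_const_mul, integral_comp_mul_left_Ioi _ _ (hc n), mul_zero, smul_eq_mul]
    field_simp
  have hnorm : ∀ n : ℕ, ∫ y in Ioi (0 : ℝ), ‖F n y‖ =
      1 / ((n : ℝ) + 1 / 2) ^ 4 * (2 * ∫ t in Ioi (0 : ℝ), ‖G t‖) := by
    intro n
    have := hc n
    simp only [hFG, norm_mul]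
    rw [integral_const_mul, integral_comp_mul_left_Ioi (fun t => ‖G t‖) _ (hc n), mul_zero,
      smul_eq_mul, Real.norm_of_nonneg (by positivity)]
    field_simp
  have hz := hasSum_one_div_add_half_pow_four
  have hsum := hasSum_integral_of_summable_integral_norm (μ := volume.restrict (Ioi (0 : ℝ)))
    (F := F) h_int (by simp only [hnorm]; exact (hz.summable.mul_right _))
  simp only [hval, hG, integral_pow_three_mul_quarticSum] at hsum
  have heq := (hz.mul_right (2 * -Real.log 2)).unique hsum
  rw [show -(π ^ 4 / 3 * Real.log 2) = π ^ 4 / 6 * (2 * -Real.log 2) by ring, heq]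
  refine setIntegral_congr_fun measurableSet_Ioi fun y hy => ?_
  exact ((hh y hy).mul_left (y ^ 3)).tsum_eq.symm

end QuarticSumIntegral

/-! ### The change of variables to the period ratio -/

section PeriodRatio

open Set

lemma EllK'_eq_paramK {k : ℝ} (h0 : 0 ≤ k) (h1 : k ≤ 1) : EllK' k = paramK (1 - k ^ 2) := by
  rw [EllK', EllK_eq_paramK, Real.sq_sqrt (by nlinarith)]

lemma hasDerivAt_paramK_ratio_sq {k : ℝ} (hk : k ∈ Ioo (0 : ℝ) 1) :
    HasDerivAt (fun k => paramK (1 - k ^ 2) / paramK (k ^ 2))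
      (-(π / (2 * k * (1 - k ^ 2) * paramK (k ^ 2) ^ 2))) k := by
  obtain ⟨h0, h1⟩ := hk
  have hk2 : k ^ 2 < 1 := by nlinarith
  have hK := paramK_pos hk2
  have h := HasDerivAt.comp (h := fun k : ℝ => k ^ 2) k
    (hasDerivAt_paramK_ratio (pow_pos h0 2) hk2) (hasDerivAt_pow 2 k)
  refine h.congr_deriv ?_
  have : 0 < 1 - k ^ 2 := by linarith
  push_cast
  field_simp
  norm_num

lemma strictAntiOn_paramK_ratio_sq :
    StrictAntiOn (fun k => paramK (1 - k ^ 2) / paramK (k ^ 2)) (Ioo 0 1) := by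
  refine strictAntiOn_of_deriv_neg (convex_Ioo 0 1)
    (fun k hk => (hasDerivAt_paramK_ratio_sq hk).continuousAt.continuousWithinAt) fun k hk => ?_
  rw [interior_Ioo] at hk
  rw [(hasDerivAt_paramK_ratio_sq hk).deriv]
  obtain ⟨h0, h1⟩ := hk
  have hk2 : k ^ 2 < 1 := by nlinarith
  have hK := paramK_pos hk2
  have : 0 < 1 - k ^ 2 := by linarith
  have := Real.pi_pos
  exact neg_neg_of_pos (by positivity)

lemma exists_sumInvPow_eq_paramK {y : ℝ} (hy : 0 < y) :
    ∃ k ∈ Ioo (0 : ℝ) 1, paramK (1 - k ^ 2) / paramK (k ^ 2) = y ∧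
      16 * (k ^ 2 * (1 - k ^ 2) * paramK (k ^ 2) ^ 4) =
        -3 * ((PeriodPair.rectPair one_pos hy).sumInvPow ⟨1 / 2, y / 2⟩ 4).re := by
  obtain ⟨m, ⟨h0, h1⟩, h⟩ := PeriodPair.exists_paramK_ratio_eq hy
  refine ⟨√m, ⟨Real.sqrt_pos.2 h0, (Real.sqrt_lt' one_pos).2 (by simpa using h1)⟩, ?_⟩
  rwa [Real.sq_sqrt h0.le]

lemma image_paramK_ratio_sq :
    (fun k => paramK (1 - k ^ 2) / paramK (k ^ 2)) '' Ioo 0 1 = Ioi 0 := by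
  ext y
  constructor
  · rintro ⟨k, ⟨h0, h1⟩, rfl⟩
    exact div_pos (paramK_pos (by nlinarith)) (paramK_pos (by nlinarith))
  · intro hy
    obtain ⟨k, hk, h, -⟩ := exists_sumInvPow_eq_paramK hy
    exact ⟨k, hk, h⟩

end PeriodRatio

open Set in
theorem stmt_10 :
    ∫ k in (0:ℝ)..(1:ℝ), k * (EllK' k)^3 / EllK k = π^3 * Real.log 2 / 8 := by
  set r : ℝ → ℝ := fun k => paramK (1 - k ^ 2) / paramK (k ^ 2) with hr
  set h : ℝ → ℝ := fun y => if hy : 0 < y then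
    ((PeriodPair.rectPair one_pos hy).sumInvPow ⟨1 / 2, y / 2⟩ 4).re else 0 with hh
  have h_int := integral_pow_three_mul_sumInvPow (h := h) fun y hy => by
    rw [hh]
    simp only [dif_pos hy]
    exact PeriodPair.hasSum_sumInvPow_rectPair hy
  have hval : ∀ k ∈ Ioo (0 : ℝ) 1,
      16 * (k ^ 2 * (1 - k ^ 2) * paramK (k ^ 2) ^ 4) = -3 * h (r k) := by
    intro k hk
    have hy : 0 < r k := image_paramK_ratio_sq.subset (mem_image_of_mem r hk)
    obtain ⟨l, hl, hrl, hl4⟩ := exists_sumInvPow_eq_paramK hy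
    obtain rfl := strictAntiOn_paramK_ratio_sq.injOn hl hk hrl
    rw [hl4, hh]
    simp only [dif_pos hy]
  have hsub := integral_image_eq_integral_abs_deriv_smul measurableSet_Ioo
    (fun k hk => (hasDerivAt_paramK_ratio_sq hk).hasDerivWithinAt)
    strictAntiOn_paramK_ratio_sq.injOn fun y => -3 / (8 * π) * (y ^ 3 * h y)
  rw [image_paramK_ratio_sq, integral_const_mul, h_int] at hsub
  rw [intervalIntegral.integral_of_le zero_le_one, integral_Ioc_eq_integral_Ioo]
  have hpi := Real.pi_pos
  calc _ = _ := setIntegral_congr_fun measurableSet_Ioo fun k hk => ?_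
    _ = _ := hsub.symm
    _ = _ := by field_simp
  have hv := hval k hk
  have hk0 := hk.1
  have hk1 := hk.2
  have hk2 : k ^ 2 < 1 := by nlinarith
  have hK := paramK_pos hk2
  have h1k : 0 < 1 - k ^ 2 := by linarith
  have hhr : h (r k) = -(16 / 3) * (k ^ 2 * (1 - k ^ 2) * paramK (k ^ 2) ^ 4) := by linarith
  have hd : 0 < π / (2 * k * (1 - k ^ 2) * paramK (k ^ 2) ^ 2) := by positivity
  change k * (EllK' k)^3 / EllK k = |_| • (-3 / (8 * π) * (r k ^ 3 * h (r k)))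
  rw [hhr, abs_neg, abs_of_pos hd, smul_eq_mul, EllK'_eq_paramK hk0.le hk1.le, EllK_eq_paramK, hr]
  field_simp
  ring
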